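/- Let β > 2 and let (α_N) satisfy α_N > 0 and α_N → 0. There exists a constant C > 0 such that if p(N) ∈ (0,1] satisfies N·p(N) ≥ C·log N for all sufficiently large N, then P-almost surely the following holds: if p(N)·N·α_N → ∞, the pushforward of μ^ε_{N,α_N,β} under σ ↦ (m₁(σ), m₂(σ)) converges weakly to (1/2)(δ_{(m⁺(β/2), m⁺(β/2))} + δ_{(m⁻(β/2), m⁻(β/2))}), and if p(N)·N·α_N → 0, it converges weakly to (1/4)(δ_{(m⁺(β/2), m⁺(β/2))} + δ_{(m⁺(β/2), m⁻(β/2))} + δ_{(m⁻(β/2), m⁺(β/2))} + δ_{(m⁻(β/2), m⁻(β/2))}), as N → ∞ through even integers. -/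

import Mathlib

open MeasureTheory Filter

noncomputable section

/-- The spin value ±1 associated to a Boolean. -/
def spinVal (s : Bool) : ℝ := if s then 1 else -1

/-- A spin configuration on `N = 2n` sites, split into the two blocks
`B₁` (first component) and `B₂` (second component); the perfect matching
pairs the `i`-th spin of `B₁` with the `i`-th spin of `B₂`. -/
abbrev TwoConf (n : ℕ) := (Fin n → Bool) × (Fin n → Bool)

/-- Block magnetization `m₁(σ) = (2/N) ∑_{i ∈ B₁} σᵢ` with `N = 2n`. -/
def mag1 (n : ℕ) (σ : TwoConf n) : ℝ := (2 / (2 * n : ℝ)) * ∑ i, spinVal (σ.1 i)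

/-- Block magnetization `m₂(σ) = (2/N) ∑_{i ∈ B₂} σᵢ` with `N = 2n`. -/
def mag2 (n : ℕ) (σ : TwoConf n) : ℝ := (2 / (2 * n : ℝ)) * ∑ i, spinVal (σ.2 i)

/-- The diluted Hamiltonian
`H^ε_{N,α,β}(σ) = −(β/(2N))(∑_{i,j∈B₁} σᵢσⱼ + ∑_{i,j∈B₂} σᵢσⱼ)
  − α ∑_{i∈B₁} ε_i σᵢ σ_{i+N/2}` with `N = 2n`. -/
def dilH (n : ℕ) (α β : ℝ) (ε : Fin n → Bool) (σ : TwoConf n) : ℝ :=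
  -(β / (2 * (2 * n : ℝ))) *
      ((∑ i, ∑ j, spinVal (σ.1 i) * spinVal (σ.1 j)) +
        ∑ i, ∑ j, spinVal (σ.2 i) * spinVal (σ.2 j))
    - α * ∑ i, (if ε i then (1 : ℝ) else 0) * (spinVal (σ.1 i) * spinVal (σ.2 i))

/-- The distribution of the magnetization vector `(m₁, m₂)` under the quenched Gibbs
measure `μ^ε_{N,α,β}`, i.e. the pushforward of `μ^ε_{N,α,β}` under `σ ↦ (m₁(σ), m₂(σ))`. -/
def dilMagDist (n : ℕ) (α β : ℝ) (ε : Fin n → Bool) : Measure (ℝ × ℝ) :=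
  (∑ σ : TwoConf n, ENNReal.ofReal (Real.exp (-dilH n α β ε σ)))⁻¹ •
    ∑ σ : TwoConf n,
      ENNReal.ofReal (Real.exp (-dilH n α β ε σ)) • Measure.dirac (mag1 n σ, mag2 n σ)

/-- The law of the i.i.d. Bernoulli(q) dilution variables `(ε_i)_{i ∈ B₁}`. -/
def bernMeasure (n : ℕ) (q : ℝ) : Measure (Fin n → Bool) :=
  ∑ ε : Fin n → Bool,
    ENNReal.ofReal (∏ i, if ε i then q else 1 - q) • Measure.dirac ε

/-!
Replacing the square of each block magnetization by its tangent at an attained value makes the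
spins at distinct edges of the matching independent, so the total weight of a magnetization vector
is bounded by a product governed by the Curie–Weiss free energy; only `O(n²)` vectors are attained.
The free energy is maximal exactly where both magnetizations are `± m`, hence the other vectors are
exponentially unlikely as soon as the coupling `a` is small, and which of the four peaks survive
depends on `aK`, with `K` the number of active edges.

If `aK → 0`, the coupling perturbs the uncoupled system negligibly, and that system is invariant
under flipping either block. If `aK → ∞`, the peaks with opposite signs have overlap of order `-K`,
except on an event that is exponentially small in `K`, and are suppressed by `exp (-θ a K)`; the
invariance under flipping both blocks then gives equal weight to the two remaining peaks. By
Chernoff's bound and the Borel–Cantelli lemma, `K` is almost surely of order `n p`, and the constant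
in `N p(N) ≥ C log N` makes the event exponentially small in `K` beat the polynomial number of
magnetization vectors.
-/

open scoped Topology BoundedContinuousFunction

/-! ### The mean-field free energy -/

lemma hasDerivAt_tanh (x : ℝ) : HasDerivAt Real.tanh (1 - Real.tanh x ^ 2) x := by
  rw [show Real.tanh = Real.sinh / Real.cosh from funext Real.tanh_eq_sinh_div_cosh]
  refine ((Real.hasDerivAt_sinh x).div (Real.hasDerivAt_cosh x)
    (Real.cosh_pos x).ne').congr_deriv ?_
  have hcosh : Real.cosh x ≠ 0 := (Real.cosh_pos x).ne'
  simp only [Pi.div_apply]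
  field_simp

lemma tanh_strictMono : StrictMono Real.tanh :=
  strictMono_of_deriv_pos fun x ↦ by
    rw [(hasDerivAt_tanh x).deriv]
    linarith [Real.tanh_sq_lt_one x]

lemma hasDerivAt_tanh_mul_sub_self (γ x : ℝ) :
    HasDerivAt (fun z ↦ Real.tanh (γ * z) - z) ((1 - Real.tanh (γ * x) ^ 2) * γ - 1) x :=
  ((hasDerivAt_tanh (γ * x)).comp x (hasDerivAt_const_mul γ)).sub (hasDerivAt_id x)

lemma strictConcaveOn_tanh_mul_sub_self {γ : ℝ} (hγ : 0 < γ) :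
    StrictConcaveOn ℝ (Set.Ici 0) fun z ↦ Real.tanh (γ * z) - z := by
  refine StrictAntiOn.strictConcaveOn_of_deriv (convex_Ici 0)
    (fun x _ ↦ (hasDerivAt_tanh_mul_sub_self γ x).continuousAt.continuousWithinAt) ?_
  rw [interior_Ici]
  intro x hx y _ hxy
  rw [(hasDerivAt_tanh_mul_sub_self γ x).deriv, (hasDerivAt_tanh_mul_sub_self γ y).deriv]
  have htanh_pos : 0 < Real.tanh (γ * x) := by
    simpa using tanh_strictMono (mul_pos hγ hx)
  have htanh_lt : Real.tanh (γ * x) < Real.tanh (γ * y) :=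
    tanh_strictMono (mul_lt_mul_of_pos_left hxy hγ)
  have hsq := pow_lt_pow_left₀ htanh_lt htanh_pos.le two_ne_zero
  nlinarith

section FixedPoint

variable {γ m : ℝ}

lemma lt_tanh_mul_of_lt_fixedPoint (hγ : 0 < γ) (hfix : m = Real.tanh (γ * m))
    {x : ℝ} (hx : 0 < x) (hxm : x < m) : x < Real.tanh (γ * x) := by
  have hslope := (strictConcaveOn_tanh_mul_sub_self hγ).slope_anti_adjacent
    (Set.self_mem_Ici) (Set.mem_Ici.2 (hx.trans hxm).le) hx hxm
  simp only [← hfix, mul_zero, Real.tanh_zero, sub_self, sub_zero, zero_sub] at hslope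
  rw [div_lt_div_iff₀ (sub_pos.2 hxm) hx] at hslope
  nlinarith

lemma tanh_mul_lt_of_fixedPoint_lt (hγ : 0 < γ) (hm : 0 < m) (hfix : m = Real.tanh (γ * m))
    {x : ℝ} (hmx : m < x) : Real.tanh (γ * x) < x := by
  have hslope := (strictConcaveOn_tanh_mul_sub_self hγ).slope_anti_adjacent
    (Set.self_mem_Ici) (Set.mem_Ici.2 (hm.trans hmx).le) hm hmx
  simp only [← hfix, mul_zero, Real.tanh_zero, sub_self, sub_zero, zero_div] at hslope
  rw [div_neg_iff] at hslope
  rcases hslope with h | h <;> linarith [h.1, h.2]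

lemma fixedPoint_pos (hγ : 1 < γ) (hm : IsGreatest {z | z = Real.tanh (γ * z)} m) : 0 < m := by
  have hderiv : 0 < deriv (fun z ↦ Real.tanh (γ * z) - z) 0 := by
    rw [(hasDerivAt_tanh_mul_sub_self γ 0).deriv]
    simpa using hγ
  obtain ⟨t, hsign, ht⟩ : ∃ t, SignType.sign (Real.tanh (γ * t) - t) = SignType.sign (t - 0) ∧
      t ∈ Set.Ioo (0 : ℝ) 1 :=
    (((eventually_nhdsWithin_sign_eq_of_deriv_pos hderiv (by simp)).filter_mono
      nhdsWithin_le_nhds).and (Ioo_mem_nhdsGT one_pos)).exists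
  have htpos : 0 < Real.tanh (γ * t) - t := by
    rwa [sub_zero, sign_pos ht.1, sign_eq_one_iff] at hsign
  obtain ⟨z, hz, hz₀⟩ := intermediate_value_Icc' ht.2.le
    (fun x _ ↦ (hasDerivAt_tanh_mul_sub_self γ x).continuousAt.continuousWithinAt)
    ⟨(sub_neg.2 (Real.tanh_lt_one (γ * 1))).le, htpos.le⟩
  exact ht.1.trans_le (hz.1.trans (hm.2 (sub_eq_zero.1 hz₀).symm))

/-- The free energy per spin of a Curie–Weiss block, as a function of the point `x` at which the
quadratic interaction `γ m² / 2` is replaced by its tangent, leaving independent spins in the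
field `γ x`. -/
def freeEnergy (γ x : ℝ) : ℝ := Real.log (2 * Real.cosh (γ * x)) - γ * x ^ 2 / 2

lemma hasDerivAt_freeEnergy (γ x : ℝ) :
    HasDerivAt (freeEnergy γ) (γ * (Real.tanh (γ * x) - x)) x := by
  have hcosh : Real.cosh (γ * x) ≠ 0 := (Real.cosh_pos _).ne'
  have hlog := (((Real.hasDerivAt_cosh (γ * x)).comp x (hasDerivAt_const_mul γ)).const_mul 2).log
    (by simpa using hcosh)
  refine (hlog.sub (((hasDerivAt_pow 2 x).const_mul γ).div_const 2)).congr_deriv ?_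
  simp only [Function.comp_apply, Real.tanh_eq_sinh_div_cosh, Nat.cast_ofNat]
  field_simp
  ring

lemma continuous_freeEnergy (γ : ℝ) : Continuous (freeEnergy γ) :=
  continuous_iff_continuousAt.2 fun x ↦ (hasDerivAt_freeEnergy γ x).continuousAt

lemma freeEnergy_abs (γ x : ℝ) : freeEnergy γ |x| = freeEnergy γ x := by
  rcases abs_choice x with h | h <;> simp [h, freeEnergy]

lemma freeEnergy_lt (hγ : 0 < γ) (hm : 0 < m) (hfix : m = Real.tanh (γ * m))
    {x : ℝ} (hx : |x| ≠ m) : freeEnergy γ x < freeEnergy γ m := by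
  have hcont : ∀ s, ContinuousOn (freeEnergy γ) s := fun _ ↦
    (continuous_freeEnergy γ).continuousOn
  rw [← freeEnergy_abs γ x]
  rcases hx.lt_or_gt with hlt | hgt
  · refine strictMonoOn_of_deriv_pos (convex_Icc 0 m) (hcont _) (fun z hz ↦ ?_)
      ⟨abs_nonneg x, hlt.le⟩ ⟨hm.le, le_rfl⟩ hlt
    rw [interior_Icc] at hz
    rw [(hasDerivAt_freeEnergy γ z).deriv]
    exact mul_pos hγ (sub_pos.2 (lt_tanh_mul_of_lt_fixedPoint hγ hfix hz.1 hz.2))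
  · refine strictAntiOn_of_deriv_neg (convex_Ici m) (hcont _) (fun z hz ↦ ?_)
      Set.self_mem_Ici hgt.le hgt
    rw [interior_Ici] at hz
    rw [(hasDerivAt_freeEnergy γ z).deriv]
    exact mul_neg_of_pos_of_neg hγ (sub_neg.2 (tanh_mul_lt_of_fixedPoint_lt hγ hm hfix hz))

lemma freeEnergy_le (hγ : 0 < γ) (hm : 0 < m) (hfix : m = Real.tanh (γ * m)) (x : ℝ) :
    freeEnergy γ x ≤ freeEnergy γ m := by
  by_cases hx : |x| = m
  · rw [← freeEnergy_abs, hx]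
  · exact (freeEnergy_lt hγ hm hfix hx).le

lemma exists_freeEnergy_gap (hγ : 0 < γ) (hm : 0 < m) (hfix : m = Real.tanh (γ * m))
    {U : Set (ℝ × ℝ)} (hU : U ∈ 𝓝 (m, m)) :
    ∃ κ > 0, ∀ x ∈ Set.Icc (-1 : ℝ) 1, ∀ y ∈ Set.Icc (-1 : ℝ) 1, (|x|, |y|) ∉ U →
      freeEnergy γ x + freeEnergy γ y ≤ 2 * freeEnergy γ m - κ := by
  set A : Set (ℝ × ℝ) :=
    Set.Icc (-1) 1 ×ˢ Set.Icc (-1) 1 ∩ (fun z ↦ (|z.1|, |z.2|)) ⁻¹' (interior U)ᶜ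
  have hAcompact : IsCompact A := (isCompact_Icc.prod isCompact_Icc).inter_right
    (isOpen_interior.isClosed_compl.preimage (by fun_prop))
  have hcont : Continuous fun z : ℝ × ℝ ↦ freeEnergy γ z.1 + freeEnergy γ z.2 :=
    ((continuous_freeEnergy γ).comp continuous_fst).add
      ((continuous_freeEnergy γ).comp continuous_snd)
  have hmem : ∀ x ∈ Set.Icc (-1 : ℝ) 1, ∀ y ∈ Set.Icc (-1 : ℝ) 1, (|x|, |y|) ∉ U → (x, y) ∈ A :=
    fun x hx y hy hxy ↦ ⟨⟨hx, hy⟩, fun h ↦ hxy (interior_subset h)⟩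
  rcases A.eq_empty_or_nonempty with hempty | hne
  · exact ⟨1, one_pos, fun x hx y hy hxy ↦ by simpa [hempty] using hmem x hx y hy hxy⟩
  obtain ⟨z, hz, hmax⟩ := hAcompact.exists_isMaxOn hne hcont.continuousOn
  have hlt : freeEnergy γ z.1 + freeEnergy γ z.2 < 2 * freeEnergy γ m := by
    rcases eq_or_ne |z.1| m with h₁ | h₁
    · have h₂ : |z.2| ≠ m := fun h₂ ↦ hz.2 (by
        simpa [h₁, h₂] using mem_interior_iff_mem_nhds.2 hU)
      linarith [freeEnergy_le hγ hm hfix z.1, freeEnergy_lt hγ hm hfix h₂]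
    · linarith [freeEnergy_lt hγ hm hfix h₁, freeEnergy_le hγ hm hfix z.2]
  refine ⟨_, sub_pos.2 hlt, fun x hx y hy hxy ↦ ?_⟩
  have := hmax (hmem x hx y hy hxy)
  simp only [Set.mem_ofPred_eq] at this
  linarith

end FixedPoint

lemma cosh_sub_mul_sinh_self_lt_one {c : ℝ} (hc₀ : 0 < c) (hc₁ : c ≤ 1) :
    Real.cosh c - c * Real.sinh c < 1 := by
  have hcosh : Real.cosh c ≤ 1 + c ^ 2 := by
    have hexp := (abs_le.1 (Real.abs_exp_sub_one_le (x := c ^ 2 / 2)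
      (by rw [abs_of_nonneg (by positivity)]; nlinarith))).2
    rw [abs_of_nonneg (by positivity)] at hexp
    linarith [Real.cosh_le_exp_half_sq c]
  have hsinh : c < Real.sinh c := Real.self_lt_sinh_iff.2 hc₀
  nlinarith

lemma exists_exp_mul_cosh_sub_mul_sinh_lt_one {c : ℝ} (hc₀ : 0 < c) (hc₁ : c ≤ 1) :
    ∃ s > 0, ∃ θ > 0, Real.exp (s * θ) * (Real.cosh s - c * Real.sinh s) ∈ Set.Ioo (0 : ℝ) 1 := by
  set r := Real.cosh c - c * Real.sinh c with hr
  have hr₁ : r < 1 := cosh_sub_mul_sinh_self_lt_one hc₀ hc₁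
  have hr₀ : 0 < r := by
    nlinarith [Real.sinh_lt_cosh c, Real.sinh_pos_iff.2 hc₀]
  refine ⟨c, hc₀, (1 - r) / c, div_pos (sub_pos.2 hr₁) hc₀, ?_⟩
  rw [← hr, mul_div_cancel₀ _ hc₀.ne']
  refine ⟨by positivity, ?_⟩
  have hexp : r < Real.exp (r - 1) := by
    linarith [Real.add_one_lt_exp (sub_ne_zero.2 hr₁.ne)]
  calc Real.exp (1 - r) * r < Real.exp (1 - r) * Real.exp (r - 1) := by gcongr
    _ = 1 := by rw [← Real.exp_add]; simp

/-! ### Concentration along the orbit of a finite symmetry group -/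

section Concentration

variable {ι X : Type*} [TopologicalSpace X]

variable (G : Type*) [Group G] [Fintype G] [MulAction G X] [ContinuousConstSMul G X]

/-- The average of a bounded continuous function over the orbits of a finite group. Against an
invariant measure it has the same integral as the function, and it is constant on each orbit. -/
def orbitAverage (f : X →ᵇ ℝ) : X →ᵇ ℝ :=
  (Fintype.card G : ℝ)⁻¹ • ∑ g : G, f.compContinuous ⟨(g • ·), continuous_const_smul g⟩

variable {G}

lemma orbitAverage_apply (f : X →ᵇ ℝ) (x : X) :
    orbitAverage G f x = (Fintype.card G : ℝ)⁻¹ * ∑ g : G, f (g • x) := by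
  simp [orbitAverage]

lemma orbitAverage_smul (f : X →ᵇ ℝ) (g : G) (x : X) :
    orbitAverage G f (g • x) = orbitAverage G f x := by
  simp only [orbitAverage_apply, smul_smul]
  exact congrArg _ (Equiv.sum_comp (Equiv.mulRight g) fun h ↦ f (h • x))

variable [MeasurableSpace X] [BorelSpace X]

lemma abs_integral_sub_le {μ : Measure X} [IsProbabilityMeasure μ] (g : X →ᵇ ℝ) (L : ℝ)
    {η : ℝ} (hη : 0 ≤ η) :
    |∫ y, g y ∂μ - L| ≤ η + (‖g‖ + |L|) * μ.real {y | η ≤ |g y - L|} := by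
  set S := {y | η ≤ |g y - L|}
  have hS : MeasurableSet S :=
    (isClosed_le continuous_const (by fun_prop)).measurableSet
  have hg : Integrable g μ := g.integrable μ
  have hpoint : ∀ y, |g y - L| ≤ η + S.indicator (fun _ ↦ ‖g‖ + |L|) y := by
    intro y
    by_cases hy : y ∈ S
    · rw [Set.indicator_of_mem hy]
      linarith [abs_sub (g y) L, g.norm_coe_le_norm y, Real.norm_eq_abs (g y)]
    · rw [Set.indicator_of_notMem hy, add_zero]
      exact (not_le.1 hy).le
  calc |∫ y, g y ∂μ - L| = |∫ y, (g y - L) ∂μ| := by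
        rw [integral_sub hg (integrable_const L), integral_const, probReal_univ, one_smul]
    _ ≤ ∫ y, |g y - L| ∂μ := abs_integral_le_integral_abs
    _ ≤ ∫ y, (η + S.indicator (fun _ ↦ ‖g‖ + |L|) y) ∂μ :=
        integral_mono (hg.sub (integrable_const L)).abs
          ((integrable_const η).add ((integrable_const _).indicator hS)) hpoint
    _ = η + (‖g‖ + |L|) * μ.real S := by
        rw [integral_add (integrable_const η) ((integrable_const _).indicator hS),
          integral_const, probReal_univ, one_smul, integral_indicator_const _ hS, smul_eq_mul,
          mul_comm]

lemma tendsto_integral_of_tendsto_measureReal {l : Filter ι} {μ : ι → Measure X}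
    [∀ i, IsProbabilityMeasure (μ i)] (g : X →ᵇ ℝ) (L : ℝ)
    (h : ∀ η > 0, Tendsto (fun i ↦ (μ i).real {y | η ≤ |g y - L|}) l (𝓝 0)) :
    Tendsto (fun i ↦ ∫ y, g y ∂μ i) l (𝓝 L) := by
  refine Metric.tendsto_nhds.2 fun δ hδ ↦ ?_
  have hlim : Tendsto (fun i ↦ δ / 2 + (‖g‖ + |L|) * (μ i).real {y | δ / 2 ≤ |g y - L|}) l
      (𝓝 (δ / 2)) := by
    simpa using ((h _ (half_pos hδ)).const_mul (‖g‖ + |L|)).const_add (δ / 2)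
  filter_upwards [hlim.eventually_lt_const (half_lt_self hδ)] with i hi
  exact (abs_integral_sub_le g L (half_pos hδ).le).trans_lt hi

lemma integral_orbitAverage (f : X →ᵇ ℝ) (μ : Measure X) [IsFiniteMeasure μ]
    [SMulInvariantMeasure G X μ] : ∫ x, orbitAverage G f x ∂μ = ∫ x, f x ∂μ := by
  have hint : ∀ g : G, Integrable (fun x ↦ f (g • x)) μ := fun g ↦
    (f.compContinuous ⟨(g • ·), continuous_const_smul g⟩).integrable μ
  have hcard : (Fintype.card G : ℝ) ≠ 0 := Nat.cast_ne_zero.2 Fintype.card_ne_zero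
  simp only [orbitAverage_apply]
  rw [integral_const_mul, integral_finsetSum _ fun g _ ↦ hint g]
  simp only [integral_smul_eq_self (μ := μ) f, Finset.sum_const, Finset.card_univ, nsmul_eq_mul]
  rw [inv_mul_cancel_left₀ hcard]

theorem tendsto_integral_of_concentration_on_orbit {l : Filter ι} {μ : ι → Measure X}
    [∀ i, IsProbabilityMeasure (μ i)] [∀ i, SMulInvariantMeasure G X (μ i)] {x : X}
    (h : ∀ U ∈ 𝓝 x, Tendsto (fun i ↦ (μ i).real {y | ∀ g : G, g • y ∉ U}) l (𝓝 0))
    (f : X →ᵇ ℝ) :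
    Tendsto (fun i ↦ ∫ y, f y ∂μ i) l (𝓝 ((Fintype.card G : ℝ)⁻¹ * ∑ g : G, f (g • x))) := by
  rw [← orbitAverage_apply]
  simp only [← integral_orbitAverage (G := G) f]
  refine tendsto_integral_of_tendsto_measureReal _ _ fun η hη ↦ ?_
  have hU : {y | |orbitAverage G f y - orbitAverage G f x| < η} ∈ 𝓝 x :=
    (orbitAverage G f).continuous.continuousAt.eventually (Metric.ball_mem_nhds _ hη)
  refine squeeze_zero (fun _ ↦ measureReal_nonneg) (fun i ↦ measureReal_mono ?_) (h _ hU)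
  intro y hy g
  simpa [orbitAverage_smul] using hy

end Concentration

/-! ### The two-block spin system -/

section SpinSystem

variable {n : ℕ}

/-- The magnetization `(2/N) ∑ τᵢ` of one block, with `N = 2n`. -/
def blockMag (τ : Fin n → Bool) : ℝ := (2 / (2 * n : ℝ)) * ∑ i, spinVal (τ i)

/-- The magnetization vector `(m₁, m₂)`. -/
def magVec (σ : TwoConf n) : ℝ × ℝ := (mag1 n σ, mag2 n σ)

/-- The number of matching edges present in the dilution `ε`. -/
def activeEdges (ε : Fin n → Bool) : ℕ := (Finset.univ.filter fun i ↦ ε i).card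

/-- The interaction `∑ εᵢ σᵢ σ_{i+N/2}` between the two blocks. -/
def overlap (ε : Fin n → Bool) (σ : TwoConf n) : ℝ :=
  ∑ i, (if ε i then (1 : ℝ) else 0) * (spinVal (σ.1 i) * spinVal (σ.2 i))

/-- The Boltzmann weight of `σ` at coupling `a` along the matching, in terms of `γ = β / 2`. -/
def gibbsWeight (γ a : ℝ) (ε : Fin n → Bool) (σ : TwoConf n) : ℝ :=
  Real.exp (n * (γ / 2) * ((magVec σ).1 ^ 2 + (magVec σ).2 ^ 2) + a * overlap ε σ)

/-- The Boltzmann weight with each `m²` replaced by its tangent `2 x m - x²` at `z = (x, y)`. The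
spins at distinct edges of the matching are independent under this weight. -/
def tiltWeight (γ a : ℝ) (z : ℝ × ℝ) (ε : Fin n → Bool) (σ : TwoConf n) : ℝ :=
  Real.exp (n * (γ / 2) * ((2 * z.1 * (magVec σ).1 - z.1 ^ 2) +
    (2 * z.2 * (magVec σ).2 - z.2 ^ 2)) + a * overlap ε σ)

/-- The partition function. -/
def partitionFn (γ a : ℝ) (ε : Fin n → Bool) : ℝ := ∑ σ, gibbsWeight γ a ε σ

open Classical in
/-- The contribution to the partition function of the configurations with magnetization
vector in `S`. -/
def restrictedPartitionFn (γ a : ℝ) (ε : Fin n → Bool) (S : Set (ℝ × ℝ)) : ℝ :=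
  ∑ σ with magVec σ ∈ S, gibbsWeight γ a ε σ

lemma gibbsWeight_pos (γ a : ℝ) (ε : Fin n → Bool) (σ : TwoConf n) : 0 < gibbsWeight γ a ε σ :=
  Real.exp_pos _

lemma partitionFn_pos (γ a : ℝ) (ε : Fin n → Bool) : 0 < partitionFn γ a ε :=
  Finset.sum_pos (fun σ _ ↦ gibbsWeight_pos γ a ε σ) Finset.univ_nonempty

lemma gibbsWeight_eq_mul (γ a : ℝ) (ε : Fin n → Bool) (σ : TwoConf n) :
    gibbsWeight γ a ε σ = gibbsWeight γ 0 ε σ * Real.exp (a * overlap ε σ) := by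
  simp only [gibbsWeight, zero_mul, add_zero, Real.exp_add]

lemma abs_spinVal (b : Bool) : |spinVal b| = 1 := by
  cases b <;> simp [spinVal]

lemma abs_overlap_le (ε : Fin n → Bool) (σ : TwoConf n) : |overlap ε σ| ≤ activeEdges ε := by
  calc |overlap ε σ| ≤ ∑ i, |(if ε i then (1 : ℝ) else 0) * (spinVal (σ.1 i) * spinVal (σ.2 i))| :=
        Finset.abs_sum_le_sum_abs _ _
    _ = ∑ i, if ε i then (1 : ℝ) else 0 := by
        refine Finset.sum_congr rfl fun i _ ↦ ?_
        rw [abs_mul, abs_mul, abs_spinVal, abs_spinVal]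
        split_ifs <;> simp
    _ = activeEdges ε := by rw [Finset.sum_boole, activeEdges]

lemma activeEdges_le (ε : Fin n → Bool) : activeEdges ε ≤ n := by
  simpa [activeEdges] using Finset.card_filter_le Finset.univ fun i ↦ ε i

lemma sum_spinVal (τ : Fin n → Bool) : ∑ i, spinVal (τ i) = n * blockMag τ := by
  rcases eq_or_ne n 0 with rfl | hn
  · simp
  · have hn' : (n : ℝ) ≠ 0 := Nat.cast_ne_zero.2 hn
    rw [blockMag]
    field_simp

lemma sum_prod_twoConf (F : Fin n → Bool → Bool → ℝ) :
    ∑ σ : TwoConf n, ∏ i, F i (σ.1 i) (σ.2 i) = ∏ i, ∑ s : Bool × Bool, F i s.1 s.2 := by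
  rw [Finset.prod_univ_sum, Fintype.piFinset_univ]
  exact (Equiv.sum_comp (Equiv.arrowProdEquivProdArrow (Fin n) (fun _ ↦ Bool) fun _ ↦ Bool)
    fun σ : TwoConf n ↦ ∏ i, F i (σ.1 i) (σ.2 i)).symm

lemma sum_exp_edge (b c a : ℝ) :
    ∑ s : Bool × Bool, Real.exp (b * spinVal s.1 + c * spinVal s.2 +
      a * (spinVal s.1 * spinVal s.2)) =
    2 * Real.cosh b * (2 * Real.cosh c) *
      (Real.cosh a + Real.sinh a * (Real.tanh b * Real.tanh c)) := by
  have hb : Real.cosh b ≠ 0 := (Real.cosh_pos b).ne'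
  have hc : Real.cosh c ≠ 0 := (Real.cosh_pos c).ne'
  calc _ = 4 * (Real.cosh b * Real.cosh c * Real.cosh a +
        Real.sinh b * Real.sinh c * Real.sinh a) := by
        simp only [Fintype.sum_prod_type, Fintype.sum_bool, spinVal, if_true, Bool.false_eq_true,
          if_false, Real.cosh_eq, Real.sinh_eq, Real.exp_add, mul_one, mul_neg, neg_neg]
        ring
    _ = _ := by
        rw [Real.tanh_eq_sinh_div_cosh, Real.tanh_eq_sinh_div_cosh]
        field_simp
        ring

lemma sum_exp_field (b c a : ℝ) (ε : Fin n → Bool) :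
    ∑ σ : TwoConf n, Real.exp (b * ∑ i, spinVal (σ.1 i) + c * ∑ i, spinVal (σ.2 i) +
      a * overlap ε σ) =
    (2 * Real.cosh b * (2 * Real.cosh c)) ^ n *
      (Real.cosh a + Real.sinh a * (Real.tanh b * Real.tanh c)) ^ activeEdges ε := by
  have hprod : ∀ σ : TwoConf n, Real.exp (b * ∑ i, spinVal (σ.1 i) + c * ∑ i, spinVal (σ.2 i) +
      a * overlap ε σ) = ∏ i, Real.exp (b * spinVal (σ.1 i) + c * spinVal (σ.2 i) +
        (if ε i then a else 0) * (spinVal (σ.1 i) * spinVal (σ.2 i))) := by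
    intro σ
    simp only [← Real.exp_sum, Finset.sum_add_distrib, overlap, Finset.mul_sum, ← mul_assoc,
      mul_ite, mul_one, mul_zero]
  simp only [hprod]
  rw [sum_prod_twoConf fun i s t ↦ Real.exp (b * spinVal s + c * spinVal t +
    (if ε i then a else 0) * (spinVal s * spinVal t))]
  simp only [sum_exp_edge]
  rw [Finset.prod_mul_distrib, Finset.prod_const, Finset.card_univ, Fintype.card_fin, activeEdges,
    ← Finset.prod_const, Finset.prod_filter]
  refine congrArg _ (Finset.prod_congr rfl fun i _ ↦ ?_)
  split_ifs <;> simp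

lemma exp_freeEnergy (γ x : ℝ) :
    Real.exp (freeEnergy γ x) = Real.exp (-(γ * x ^ 2 / 2)) * (2 * Real.cosh (γ * x)) := by
  rw [freeEnergy, sub_eq_neg_add, Real.exp_add,
    Real.exp_log (mul_pos two_pos (Real.cosh_pos _))]

lemma sum_tiltWeight (γ a : ℝ) (z : ℝ × ℝ) (ε : Fin n → Bool) :
    ∑ σ, tiltWeight γ a z ε σ =
      Real.exp (n * (freeEnergy γ z.1 + freeEnergy γ z.2)) *
        (Real.cosh a + Real.sinh a * (Real.tanh (γ * z.1) * Real.tanh (γ * z.2))) ^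
          activeEdges ε := by
  have htilt : ∀ σ, tiltWeight γ a z ε σ =
      (Real.exp (-(γ * z.1 ^ 2 / 2)) * Real.exp (-(γ * z.2 ^ 2 / 2))) ^ n *
        Real.exp (γ * z.1 * ∑ i, spinVal (σ.1 i) + γ * z.2 * ∑ i, spinVal (σ.2 i) +
          a * overlap ε σ) := by
    intro σ
    rw [sum_spinVal, sum_spinVal, ← Real.exp_add, ← Real.exp_nat_mul, ← Real.exp_add, tiltWeight]
    simp only [magVec, mag1, mag2, blockMag]
    ring_nf
  simp only [htilt]
  rw [← Finset.mul_sum, sum_exp_field, ← mul_assoc, Real.exp_nat_mul, Real.exp_add,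
    exp_freeEnergy, exp_freeEnergy, ← mul_pow]
  ring_nf

lemma tiltWeight_le_gibbsWeight {γ : ℝ} (hγ : 0 ≤ γ) (a : ℝ) (z : ℝ × ℝ) (ε : Fin n → Bool)
    (σ : TwoConf n) : tiltWeight γ a z ε σ ≤ gibbsWeight γ a ε σ := by
  refine Real.exp_le_exp.2 (add_le_add_left (mul_le_mul_of_nonneg_left ?_ (by positivity)) _)
  linarith [sq_nonneg ((magVec σ).1 - z.1), sq_nonneg ((magVec σ).2 - z.2)]

lemma tiltWeight_magVec (γ a : ℝ) (ε : Fin n → Bool) (σ : TwoConf n) :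
    tiltWeight γ a (magVec σ) ε σ = gibbsWeight γ a ε σ := by
  rw [tiltWeight, gibbsWeight]
  ring_nf

lemma exp_freeEnergy_le_partitionFn {γ : ℝ} (hγ : 0 ≤ γ) (ε : Fin n → Bool) (x : ℝ) :
    Real.exp (n * (2 * freeEnergy γ x)) ≤ partitionFn γ 0 ε := by
  calc Real.exp (n * (2 * freeEnergy γ x)) = ∑ σ, tiltWeight γ 0 (x, x) ε σ := by
        simp [sum_tiltWeight, two_mul]
    _ ≤ partitionFn γ 0 ε :=
        Finset.sum_le_sum fun σ _ ↦ tiltWeight_le_gibbsWeight hγ 0 (x, x) ε σ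

/-- The possible values of the magnetization of a block of `n` spins. -/
def magGrid (n : ℕ) : Finset ℝ := (Finset.range (n + 1)).image fun k : ℕ ↦ (2 * k - n : ℝ) / n

lemma card_magGrid_le (n : ℕ) : (magGrid n).card ≤ n + 1 :=
  Finset.card_image_le.trans_eq (Finset.card_range _)

lemma blockMag_mem_magGrid (τ : Fin n → Bool) : blockMag τ ∈ magGrid n := by
  set k := (Finset.univ.filter fun i ↦ τ i).card with hk
  have hspin : ∀ b, spinVal b = 2 * (if b then (1 : ℝ) else 0) - 1 := by
    intro b
    cases b <;> norm_num [spinVal]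
  have hsum : ∑ i, spinVal (τ i) = 2 * k - n := by
    simp only [hspin, Finset.sum_sub_distrib, ← Finset.mul_sum, Finset.sum_boole]
    simp [hk]
  refine Finset.mem_image.2 ⟨k, Finset.mem_range_succ_iff.2 ?_, ?_⟩
  · simpa using Finset.card_filter_le Finset.univ fun i ↦ τ i
  · rw [blockMag, hsum]
    ring

lemma magGrid_subset_Icc {x : ℝ} (hx : x ∈ magGrid n) : x ∈ Set.Icc (-1 : ℝ) 1 := by
  obtain ⟨k, hk, rfl⟩ := Finset.mem_image.1 hx
  have hkn : (k : ℝ) ≤ n := by exact_mod_cast Finset.mem_range_succ_iff.1 hk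
  rw [Set.mem_Icc, ← abs_le, abs_div, Nat.abs_cast]
  exact div_le_one_of_le₀ (abs_le.2 ⟨by linarith [k.cast_nonneg (α := ℝ)], by linarith⟩)
      n.cast_nonneg

lemma restrictedPartitionFn_le (γ a : ℝ) (ε : Fin n → Bool) (S : Set (ℝ × ℝ)) {B : ℝ}
    (hB₀ : 0 ≤ B) (hB : ∀ x ∈ Set.Icc (-1 : ℝ) 1, ∀ y ∈ Set.Icc (-1 : ℝ) 1, (x, y) ∈ S →
      Real.exp (n * (freeEnergy γ x + freeEnergy γ y)) *
        (Real.cosh a + Real.sinh a * (Real.tanh (γ * x) * Real.tanh (γ * y))) ^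
          activeEdges ε ≤ B) :
    restrictedPartitionFn γ a ε S ≤ (n + 1) ^ 2 * B := by
  classical
  set T := (magGrid n ×ˢ magGrid n).filter (· ∈ S)
  have hmaps : ∀ σ ∈ Finset.univ.filter (fun σ : TwoConf n ↦ magVec σ ∈ S), magVec σ ∈ T := by
    intro σ hσ
    exact Finset.mem_filter.2 ⟨Finset.mk_mem_product (blockMag_mem_magGrid σ.1)
      (blockMag_mem_magGrid σ.2), (Finset.mem_filter.1 hσ).2⟩
  have hfiber : ∀ z ∈ T, ∑ σ ∈ Finset.univ.filter (fun σ : TwoConf n ↦ magVec σ ∈ S) with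
      magVec σ = z, gibbsWeight γ a ε σ ≤ B := by
    intro z hz
    obtain ⟨hgrid, hzS⟩ := Finset.mem_filter.1 hz
    obtain ⟨hx, hy⟩ := Finset.mem_product.1 hgrid
    calc _ = ∑ σ ∈ Finset.univ.filter (fun σ : TwoConf n ↦ magVec σ ∈ S) with magVec σ = z,
          tiltWeight γ a z ε σ := Finset.sum_congr rfl fun σ hσ ↦ by
            rw [← (Finset.mem_filter.1 hσ).2, tiltWeight_magVec]
      _ ≤ ∑ σ, tiltWeight γ a z ε σ := Finset.sum_le_univ_sum_of_nonneg fun σ ↦ (Real.exp_pos _).le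
      _ ≤ B := sum_tiltWeight γ a z ε ▸
          hB z.1 (magGrid_subset_Icc hx) z.2 (magGrid_subset_Icc hy) hzS
  have hcard : T.card ≤ (n + 1) ^ 2 :=
    calc T.card ≤ (magGrid n).card * (magGrid n).card :=
          (Finset.card_filter_le _ _).trans_eq (Finset.card_product _ _)
      _ ≤ (n + 1) ^ 2 := by nlinarith [card_magGrid_le n]
  rw [restrictedPartitionFn, ← Finset.sum_fiberwise_of_maps_to hmaps]
  calc _ ≤ T.card * B := by simpa using Finset.sum_le_card_nsmul T _ B hfiber
    _ ≤ (n + 1) ^ 2 * B := by gcongr; exact_mod_cast hcard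

/-! ### Block flips -/

/-- Multiplication of all the spins of a block by the sign `u`. -/
def blockFlip (u : ℤˣ) : (Fin n → Bool) ≃ (Fin n → Bool) :=
  if u = 1 then Equiv.refl _ else Equiv.arrowCongr (Equiv.refl _) Equiv.boolNot

/-- Multiplication of the spins of the two blocks by the signs `u` and `v`. -/
def confFlip (u v : ℤˣ) : TwoConf n ≃ TwoConf n := (blockFlip u).prodCongr (blockFlip v)

lemma spinVal_blockFlip (u : ℤˣ) (τ : Fin n → Bool) (i : Fin n) :
    spinVal (blockFlip u τ i) = u • spinVal (τ i) := by
  rcases Int.units_eq_one_or u with rfl | rfl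
  · simp [blockFlip]
  · cases h : τ i <;> simp [blockFlip, spinVal, h, Units.smul_def]

lemma blockMag_blockFlip (u : ℤˣ) (τ : Fin n → Bool) :
    blockMag (blockFlip u τ) = u • blockMag τ := by
  simp only [blockMag, spinVal_blockFlip, ← Finset.smul_sum, mul_smul_comm]

lemma magVec_confFlip (u v : ℤˣ) (σ : TwoConf n) :
    magVec (confFlip u v σ) = (u • (magVec σ).1, v • (magVec σ).2) :=
  Prod.ext (blockMag_blockFlip u σ.1) (blockMag_blockFlip v σ.2)

lemma overlap_confFlip (ε : Fin n → Bool) (u v : ℤˣ) (σ : TwoConf n) :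
    overlap ε (confFlip u v σ) = (u * v) • overlap ε σ := by
  simp only [overlap, confFlip, Equiv.prodCongr_apply, Prod.map_fst, Prod.map_snd,
    spinVal_blockFlip, smul_mul_assoc, mul_smul_comm, smul_smul, mul_comm v u, Finset.smul_sum]

lemma gibbsWeight_confFlip (γ a : ℝ) (ε : Fin n → Bool) (u v : ℤˣ) (σ : TwoConf n) :
    gibbsWeight γ a ε (confFlip u v σ) = gibbsWeight γ ((u * v) • a) ε σ := by
  have hsq : ∀ (w : ℤˣ) (x : ℝ), (w • x) ^ 2 = x ^ 2 := fun w x ↦ by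
    rcases Int.units_eq_one_or w with rfl | rfl <;> simp [Units.smul_def]
  simp only [gibbsWeight, magVec_confFlip, overlap_confFlip, hsq, mul_smul_comm, smul_mul_assoc]

lemma partitionFn_zero_le (γ a : ℝ) (ε : Fin n → Bool) : partitionFn γ 0 ε ≤ partitionFn γ a ε := by
  have hflip : partitionFn γ (-a) ε = partitionFn γ a ε := by
    rw [partitionFn, partitionFn, ← Equiv.sum_comp (confFlip 1 (-1))]
    simp [gibbsWeight_confFlip, Units.smul_def]
  have havg : 2 * partitionFn γ 0 ε ≤ partitionFn γ a ε + partitionFn γ (-a) ε := by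
    simp only [partitionFn, ← Finset.sum_add_distrib, Finset.mul_sum]
    refine Finset.sum_le_sum fun σ _ ↦ ?_
    rw [gibbsWeight_eq_mul γ a, gibbsWeight_eq_mul γ (-a), ← mul_add, mul_comm]
    have hcosh := Real.one_le_cosh (a * overlap ε σ)
    rw [Real.cosh_eq, ← neg_mul] at hcosh
    exact mul_le_mul_of_nonneg_left (by linarith) (gibbsWeight_pos γ 0 ε σ).le
  linarith

end SpinSystem

/-! ### The distribution of the magnetization vector -/

section MagDist

variable {n : ℕ}

lemma exp_neg_dilH (a β : ℝ) (ε : Fin n → Bool) (σ : TwoConf n) :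
    Real.exp (-dilH n a β ε σ) = gibbsWeight (β / 2) a ε σ := by
  rcases eq_or_ne n 0 with rfl | hn
  · simp [dilH, gibbsWeight, overlap]
  have hn' : (n : ℝ) ≠ 0 := Nat.cast_ne_zero.2 hn
  rw [dilH, ← Finset.sum_mul_sum, ← Finset.sum_mul_sum, sum_spinVal, sum_spinVal, gibbsWeight,
    overlap]
  refine congrArg Real.exp ?_
  simp only [magVec, mag1, mag2, blockMag]
  field_simp
  ring

lemma dilMagDist_eq_sum (a β : ℝ) (ε : Fin n → Bool) :
    dilMagDist n a β ε = ∑ σ, ENNReal.ofReal (gibbsWeight (β / 2) a ε σ /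
      partitionFn (β / 2) a ε) • Measure.dirac (magVec σ) := by
  simp only [dilMagDist, exp_neg_dilH, Finset.smul_sum, smul_smul]
  refine Finset.sum_congr rfl fun σ _ ↦ ?_
  rw [← ENNReal.ofReal_sum_of_nonneg fun σ _ ↦ (gibbsWeight_pos (β / 2) a ε σ).le,
    ENNReal.ofReal_div_of_pos (partitionFn_pos _ _ _), ENNReal.div_eq_inv_mul]
  rfl

lemma dilMagDist_apply (a β : ℝ) (ε : Fin n → Bool) (S : Set (ℝ × ℝ)) :
    dilMagDist n a β ε S = ∑ σ, ENNReal.ofReal (gibbsWeight (β / 2) a ε σ /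
      partitionFn (β / 2) a ε) * S.indicator 1 (magVec σ) := by
  simp only [dilMagDist_eq_sum, Measure.finsetSum_apply, Measure.smul_apply, Measure.dirac_apply,
    smul_eq_mul]

lemma gibbsWeight_div_partitionFn_nonneg (γ a : ℝ) (ε : Fin n → Bool) (σ : TwoConf n) :
    0 ≤ gibbsWeight γ a ε σ / partitionFn γ a ε :=
  (div_pos (gibbsWeight_pos γ a ε σ) (partitionFn_pos γ a ε)).le

instance isProbabilityMeasure_dilMagDist (a β : ℝ) (ε : Fin n → Bool) :
    IsProbabilityMeasure (dilMagDist n a β ε) where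
  measure_univ := by
    simp only [dilMagDist_apply, Set.indicator_univ, Pi.one_apply, mul_one]
    rw [← ENNReal.ofReal_sum_of_nonneg fun σ _ ↦ gibbsWeight_div_partitionFn_nonneg _ a ε σ,
      ← Finset.sum_div, ← partitionFn, div_self (partitionFn_pos _ _ _).ne', ENNReal.ofReal_one]

lemma dilMagDist_real (a β : ℝ) (ε : Fin n → Bool) (S : Set (ℝ × ℝ)) :
    (dilMagDist n a β ε).real S =
      restrictedPartitionFn (β / 2) a ε S / partitionFn (β / 2) a ε := by
  classical
  rw [measureReal_def, dilMagDist_apply, ENNReal.toReal_sum fun σ _ ↦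
    ENNReal.mul_ne_top ENNReal.ofReal_ne_top (by by_cases h : magVec σ ∈ S <;> simp [h]),
    restrictedPartitionFn, Finset.sum_filter, Finset.sum_div]
  refine Finset.sum_congr rfl fun σ _ ↦ ?_
  by_cases h : magVec σ ∈ S <;> simp [h, gibbsWeight_div_partitionFn_nonneg]

lemma integral_dilMagDist (a β : ℝ) (ε : Fin n → Bool) (f : ℝ × ℝ → ℝ) :
    ∫ z, f z ∂dilMagDist n a β ε =
      (∑ σ, gibbsWeight (β / 2) a ε σ * f (magVec σ)) / partitionFn (β / 2) a ε := by
  rw [dilMagDist_eq_sum, integral_finsetSum_measure fun σ _ ↦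
    (integrable_dirac (by simp)).smul_measure ENNReal.ofReal_ne_top, Finset.sum_div]
  refine Finset.sum_congr rfl fun σ _ ↦ ?_
  rw [integral_smul_measure, integral_dirac,
    ENNReal.toReal_ofReal (gibbsWeight_div_partitionFn_nonneg _ a ε σ), smul_eq_mul,
    div_mul_eq_mul_div]

lemma integral_dilMagDist_sub_const (a β : ℝ) (ε : Fin n → Bool) (f : ℝ × ℝ → ℝ) (L : ℝ) :
    ∫ z, f z ∂dilMagDist n a β ε - L =
      (∑ σ, gibbsWeight (β / 2) a ε σ * (f (magVec σ) - L)) / partitionFn (β / 2) a ε := by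
  rw [integral_dilMagDist, eq_div_iff (partitionFn_pos _ _ _).ne', sub_mul,
    div_mul_cancel₀ _ (partitionFn_pos _ _ _).ne']
  simp only [mul_sub, Finset.sum_sub_distrib, ← Finset.sum_mul, partitionFn, mul_comm L]

lemma dilMagDist_preimage (a β : ℝ) (ε : Fin n → Bool) {u v : ℤˣ} (huv : (u * v) • a = a)
    (S : Set (ℝ × ℝ)) :
    dilMagDist n a β ε ((fun z ↦ (u • z.1, v • z.2)) ⁻¹' S) = dilMagDist n a β ε S := by
  rw [dilMagDist_apply, dilMagDist_apply]
  refine Eq.trans ?_ (Equiv.sum_comp (confFlip u v) _)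
  simp only [gibbsWeight_confFlip, huv, magVec_confFlip]
  rfl

instance smulInvariantMeasure_dilMagDist (a β : ℝ) (ε : Fin n → Bool) :
    SMulInvariantMeasure ℤˣ (ℝ × ℝ) (dilMagDist n a β ε) :=
  ⟨fun u S _ ↦ dilMagDist_preimage a β ε (by rw [Int.units_mul_self, one_smul]) S⟩

/-- The two coordinates of a magnetization vector can be reflected independently. -/
instance : MulAction (ℤˣ × ℤˣ) (ℝ × ℝ) where
  smul g z := (g.1 • z.1, g.2 • z.2)
  one_smul z := Prod.ext (one_smul ℤˣ z.1) (one_smul ℤˣ z.2)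
  mul_smul g h z := Prod.ext (mul_smul g.1 h.1 z.1) (mul_smul g.2 h.2 z.2)

lemma prod_sign_smul_def (g : ℤˣ × ℤˣ) (z : ℝ × ℝ) : g • z = (g.1 • z.1, g.2 • z.2) := rfl

instance : ContinuousConstSMul (ℤˣ × ℤˣ) (ℝ × ℝ) :=
  ⟨fun g ↦ (continuous_fst.const_smul g.1).prodMk (continuous_snd.const_smul g.2)⟩

instance smulInvariantMeasure_dilMagDist_zero (β : ℝ) (ε : Fin n → Bool) :
    SMulInvariantMeasure (ℤˣ × ℤˣ) (ℝ × ℝ) (dilMagDist n 0 β ε) :=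
  ⟨fun _ S _ ↦ dilMagDist_preimage 0 β ε (smul_zero _) S⟩

lemma abs_exp_sub_one_le_exp_abs_sub_one (x : ℝ) : |Real.exp x - 1| ≤ Real.exp |x| - 1 := by
  rw [abs_le]
  constructor
  · linarith [Real.one_le_cosh x, Real.cosh_eq x, Real.exp_le_exp.2 (neg_le_abs x)]
  · linarith [Real.exp_le_exp.2 (le_abs_self x)]

lemma abs_gibbsWeight_sub_le (γ a : ℝ) (ε : Fin n → Bool) (σ : TwoConf n) :
    |gibbsWeight γ a ε σ - gibbsWeight γ 0 ε σ| ≤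
      gibbsWeight γ 0 ε σ * (Real.exp (|a| * activeEdges ε) - 1) := by
  rw [gibbsWeight_eq_mul γ a, ← mul_sub_one, abs_mul, abs_of_pos (gibbsWeight_pos γ 0 ε σ)]
  refine mul_le_mul_of_nonneg_left ?_ (gibbsWeight_pos γ 0 ε σ).le
  calc |Real.exp (a * overlap ε σ) - 1| ≤ Real.exp |a * overlap ε σ| - 1 :=
        abs_exp_sub_one_le_exp_abs_sub_one _
    _ ≤ Real.exp (|a| * activeEdges ε) - 1 := by
        rw [abs_mul]
        gcongr
        exact abs_overlap_le ε σ

lemma abs_integral_dilMagDist_sub_le (a β : ℝ) (ε : Fin n → Bool) (f : ℝ × ℝ →ᵇ ℝ) :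
    |∫ z, f z ∂dilMagDist n a β ε - ∫ z, f z ∂dilMagDist n 0 β ε| ≤
      2 * ‖f‖ * (Real.exp (|a| * activeEdges ε) - 1) := by
  set w := gibbsWeight (β / 2) a ε
  set w₀ := gibbsWeight (β / 2) 0 ε
  set Z := partitionFn (β / 2) a ε
  set Z₀ := partitionFn (β / 2) 0 ε
  set L := ∫ z, f z ∂dilMagDist n 0 β ε with hL
  set δ := Real.exp (|a| * activeEdges ε) - 1
  have hZ : 0 < Z := partitionFn_pos _ _ _
  have hZ₀ : 0 < Z₀ := partitionFn_pos _ _ _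
  have hf : ∀ z, |f z - L| ≤ 2 * ‖f‖ := fun z ↦ by
    have hLf : |L| ≤ ‖f‖ := by simpa using f.norm_integral_le_norm (dilMagDist n 0 β ε)
    linarith [abs_sub (f z) L, f.norm_coe_le_norm z, Real.norm_eq_abs (f z)]
  have hcentered : ∑ σ, w₀ σ * (f (magVec σ) - L) = 0 := by
    have hzero := integral_dilMagDist_sub_const 0 β ε f L
    rwa [← hL, sub_self, eq_comm, div_eq_zero_iff, or_iff_left hZ₀.ne'] at hzero
  have hdiff : ∫ z, f z ∂dilMagDist n a β ε - L =
      (∑ σ, (w σ - w₀ σ) * (f (magVec σ) - L)) / Z := by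
    simp only [sub_mul (w _), Finset.sum_sub_distrib, hcentered, sub_zero]
    exact integral_dilMagDist_sub_const a β ε f L
  rw [hdiff, abs_div, abs_of_pos hZ, div_le_iff₀ hZ]
  calc _ ≤ ∑ σ, |(w σ - w₀ σ) * (f (magVec σ) - L)| := Finset.abs_sum_le_sum_abs _ _
    _ ≤ ∑ σ, w₀ σ * δ * (2 * ‖f‖) := Finset.sum_le_sum fun σ _ ↦ by
        rw [abs_mul]
        exact mul_le_mul (abs_gibbsWeight_sub_le _ a ε σ) (hf _) (abs_nonneg _)
          ((abs_nonneg _).trans (abs_gibbsWeight_sub_le _ a ε σ))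
    _ = 2 * ‖f‖ * δ * Z₀ := by
        rw [← Finset.sum_mul, ← Finset.sum_mul]
        change Z₀ * δ * (2 * ‖f‖) = _
        ring
    _ ≤ 2 * ‖f‖ * δ * Z := by
        have hδ : 0 ≤ δ := sub_nonneg.2 (Real.one_le_exp (by positivity))
        gcongr
        exact partitionFn_zero_le _ a ε

lemma abs_tanh_mul_tanh_le_one (x y : ℝ) : |Real.tanh x * Real.tanh y| ≤ 1 := by
  rw [abs_mul]
  exact mul_le_one₀ (Real.abs_tanh_lt_one x).le (abs_nonneg _) (Real.abs_tanh_lt_one y).le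

lemma cosh_add_sinh_mul_nonneg (a : ℝ) {t : ℝ} (ht : |t| ≤ 1) :
    0 ≤ Real.cosh a + Real.sinh a * t := by
  have hsinh : |Real.sinh a * t| ≤ Real.cosh a := by
    rw [abs_mul, Real.abs_sinh, ← Real.cosh_abs]
    exact (mul_le_of_le_one_right (Real.sinh_nonneg_iff.2 (abs_nonneg a)) ht).trans
      (Real.sinh_lt_cosh _).le
  linarith [(abs_le.1 hsinh).1]

lemma cosh_add_sinh_mul_le (a : ℝ) {t : ℝ} (ht : |t| ≤ 1) :
    Real.cosh a + Real.sinh a * t ≤ Real.exp |a| := by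
  have hsinh : Real.sinh a * t ≤ Real.sinh |a| := by
    rw [← Real.abs_sinh]
    exact (le_abs_self _).trans ((abs_mul _ _).trans_le (mul_le_of_le_one_right (abs_nonneg _) ht))
  rw [← Real.cosh_add_sinh, Real.cosh_abs]
  gcongr

variable {m : ℝ}

theorem exists_dilMagDist_offPeak_le {β : ℝ} (hβ : 0 < β) (hm : 0 < m)
    (hfix : m = Real.tanh (β / 2 * m)) {U : Set (ℝ × ℝ)} (hU : U ∈ 𝓝 (m, m)) :
    ∃ κ > 0, ∀ (n : ℕ) (a : ℝ) (ε : Fin n → Bool),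
      (dilMagDist n a β ε).real {z | (|z.1|, |z.2|) ∉ U} ≤
        (n + 1) ^ 2 * Real.exp ((|a| - κ) * n) := by
  have hγ : 0 < β / 2 := half_pos hβ
  obtain ⟨κ, hκ, hgap⟩ := exists_freeEnergy_gap hγ hm hfix hU
  refine ⟨κ, hκ, fun n a ε ↦ ?_⟩
  rw [dilMagDist_real, div_le_iff₀ (partitionFn_pos _ _ _)]
  set φ := freeEnergy (β / 2)
  calc restrictedPartitionFn (β / 2) a ε {z | (|z.1|, |z.2|) ∉ U}
      ≤ (n + 1) ^ 2 * (Real.exp (n * (2 * φ m - κ)) * Real.exp |a| ^ n) := by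
        refine restrictedPartitionFn_le _ _ _ _ (by positivity) fun x hx y hy hxy ↦ ?_
        have ht := abs_tanh_mul_tanh_le_one (β / 2 * x) (β / 2 * y)
        gcongr
        · exact pow_nonneg (cosh_add_sinh_mul_nonneg a ht) _
        · exact hgap x hx y hy hxy
        · exact (pow_le_pow_left₀ (cosh_add_sinh_mul_nonneg a ht)
            (cosh_add_sinh_mul_le a ht) _).trans
            (pow_le_pow_right₀ (Real.one_le_exp (abs_nonneg a)) (activeEdges_le ε))
    _ = (n + 1) ^ 2 * Real.exp ((|a| - κ) * n) * Real.exp (n * (2 * φ m)) := by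
        rw [← Real.exp_nat_mul, ← Real.exp_add, mul_assoc, ← Real.exp_add]
        ring_nf
    _ ≤ (n + 1) ^ 2 * Real.exp ((|a| - κ) * n) * partitionFn (β / 2) a ε := by
        gcongr
        exact (exp_freeEnergy_le_partitionFn hγ.le ε m).trans (partitionFn_zero_le _ a ε)

/-- The magnetization vectors of opposite signs, with both coordinates at distance at least `c`
from zero. -/
def antiAligned (c : ℝ) : Set (ℝ × ℝ) := {z | c ≤ |z.1| ∧ c ≤ |z.2| ∧ z.1 * z.2 < 0}

lemma tanh_sq_le_tanh_mul_tanh {c x y : ℝ} (hc : 0 ≤ c) (hx : c ≤ x) (hy : c ≤ y) :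
    Real.tanh c ^ 2 ≤ Real.tanh x * Real.tanh y := by
  have htanh : 0 ≤ Real.tanh c := by simpa using tanh_strictMono.monotone hc
  rw [sq]
  exact mul_le_mul (tanh_strictMono.monotone hx) (tanh_strictMono.monotone hy) htanh
    (htanh.trans (tanh_strictMono.monotone hx))

lemma tanh_mul_tanh_le_of_mem_antiAligned {γ c x y : ℝ} (hγ : 0 ≤ γ) (hc : 0 ≤ c)
    (hxy : (x, y) ∈ antiAligned c) :
    Real.tanh (γ * x) * Real.tanh (γ * y) ≤ -Real.tanh (γ * c) ^ 2 := by
  obtain ⟨hx, hy, hneg⟩ := hxy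
  have hγc : 0 ≤ γ * c := mul_nonneg hγ hc
  rcases mul_neg_iff.1 hneg with ⟨hx₀, hy₀⟩ | ⟨hx₀, hy₀⟩
  · rw [abs_of_pos hx₀] at hx
    rw [abs_of_neg hy₀] at hy
    have := tanh_sq_le_tanh_mul_tanh hγc (mul_le_mul_of_nonneg_left hx hγ)
      (mul_le_mul_of_nonneg_left hy hγ)
    rw [mul_neg, Real.tanh_neg] at this
    linarith
  · rw [abs_of_neg hx₀] at hx
    rw [abs_of_pos hy₀] at hy
    have := tanh_sq_le_tanh_mul_tanh hγc (mul_le_mul_of_nonneg_left hx hγ)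
      (mul_le_mul_of_nonneg_left hy hγ)
    rw [mul_neg, Real.tanh_neg] at this
    linarith

lemma exp_mul_le_one_add_exp_mul {a s : ℝ} (ha : 0 ≤ a) (has : a ≤ s) (x : ℝ) :
    Real.exp (a * x) ≤ 1 + Real.exp (s * x) := by
  rcases le_total x 0 with hx | hx
  · linarith [Real.exp_le_one_iff.2 (mul_nonpos_of_nonneg_of_nonpos ha hx), Real.exp_pos (s * x)]
  · linarith [Real.exp_le_exp.2 (mul_le_mul_of_nonneg_right has hx)]

/-- Where the overlap is at most `-θK` the coupling `a` suppresses the weight by `exp (-θ a K)`;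
the other configurations are compared with the stronger coupling `s`. -/
lemma restrictedPartitionFn_le_of_le {a s : ℝ} (ha : 0 ≤ a) (has : a ≤ s) (γ θ : ℝ)
    (ε : Fin n → Bool) (S : Set (ℝ × ℝ)) :
    restrictedPartitionFn γ a ε S ≤ Real.exp (-(θ * a * activeEdges ε)) *
      (partitionFn γ 0 ε +
        Real.exp (s * θ) ^ activeEdges ε * restrictedPartitionFn γ s ε S) := by
  classical
  set K := activeEdges ε
  have hpoint : ∀ σ, gibbsWeight γ a ε σ ≤ Real.exp (-(θ * a * K)) *
      (gibbsWeight γ 0 ε σ + Real.exp (s * θ) ^ K * gibbsWeight γ s ε σ) := by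
    intro σ
    have hexp := exp_mul_le_one_add_exp_mul ha has (overlap ε σ + θ * K)
    calc gibbsWeight γ a ε σ = Real.exp (-(θ * a * K)) *
          (gibbsWeight γ 0 ε σ * Real.exp (a * (overlap ε σ + θ * K))) := by
          rw [gibbsWeight_eq_mul, mul_left_comm, ← Real.exp_add]
          ring_nf
      _ ≤ Real.exp (-(θ * a * K)) *
          (gibbsWeight γ 0 ε σ * (1 + Real.exp (s * (overlap ε σ + θ * K)))) := by
          have := gibbsWeight_pos γ 0 ε σ
          gcongr
      _ = _ := by
          rw [gibbsWeight_eq_mul γ s, ← Real.exp_nat_mul, mul_add s, Real.exp_add]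
          ring_nf
  simp only [restrictedPartitionFn]
  calc _ ≤ ∑ σ with magVec σ ∈ S, Real.exp (-(θ * a * K)) *
        (gibbsWeight γ 0 ε σ + Real.exp (s * θ) ^ K * gibbsWeight γ s ε σ) :=
        Finset.sum_le_sum fun σ _ ↦ hpoint σ
    _ = Real.exp (-(θ * a * K)) * (∑ σ with magVec σ ∈ S, gibbsWeight γ 0 ε σ +
          Real.exp (s * θ) ^ K * ∑ σ with magVec σ ∈ S, gibbsWeight γ s ε σ) := by
        rw [← Finset.mul_sum, Finset.sum_add_distrib, ← Finset.mul_sum]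
    _ ≤ _ := by
        gcongr
        exact Finset.sum_le_univ_sum_of_nonneg fun σ ↦ (gibbsWeight_pos γ 0 ε σ).le

lemma restrictedPartitionFn_antiAligned_le {γ c s : ℝ} (hγ : 0 < γ) (hm : 0 < m)
    (hfix : m = Real.tanh (γ * m)) (hc : 0 < c) (hs : 0 < s)
    (hr : 0 ≤ Real.cosh s - Real.tanh (γ * c) ^ 2 * Real.sinh s) (ε : Fin n → Bool) :
    restrictedPartitionFn γ s ε (antiAligned c) ≤ (n + 1) ^ 2 * (partitionFn γ 0 ε *
      (Real.cosh s - Real.tanh (γ * c) ^ 2 * Real.sinh s) ^ activeEdges ε) := by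
  refine restrictedPartitionFn_le _ _ _ _
    (mul_nonneg (partitionFn_pos _ _ _).le (pow_nonneg hr _)) fun x _ y _ hxy ↦ ?_
  have hnonneg := cosh_add_sinh_mul_nonneg s (abs_tanh_mul_tanh_le_one (γ * x) (γ * y))
  gcongr
  · exact (partitionFn_pos _ _ _).le
  · refine le_trans (Real.exp_le_exp.2 ?_) (exp_freeEnergy_le_partitionFn hγ.le ε m)
    gcongr
    linarith [freeEnergy_le hγ hm hfix x, freeEnergy_le hγ hm hfix y]
  · nlinarith [tanh_mul_tanh_le_of_mem_antiAligned hγ.le hc.le hxy, Real.sinh_pos_iff.2 hs]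

theorem exists_dilMagDist_antiAligned_le {β c : ℝ} (hβ : 0 < β) (hm : 0 < m)
    (hfix : m = Real.tanh (β / 2 * m)) (hc : 0 < c) :
    ∃ s > 0, ∃ θ > 0, ∃ ρ ∈ Set.Ioo (0 : ℝ) 1, ∀ (n : ℕ) (a : ℝ) (ε : Fin n → Bool),
      0 ≤ a → a ≤ s → (dilMagDist n a β ε).real (antiAligned c) ≤
        Real.exp (-(θ * a * activeEdges ε)) * (1 + (n + 1) ^ 2 * ρ ^ activeEdges ε) := by
  have hγ : 0 < β / 2 := half_pos hβ
  have htanh : 0 < Real.tanh (β / 2 * c) := by simpa using tanh_strictMono (mul_pos hγ hc)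
  obtain ⟨s, hs, θ, hθ, hρ⟩ := exists_exp_mul_cosh_sub_mul_sinh_lt_one (pow_pos htanh 2)
    (Real.tanh_sq_lt_one _).le
  set r := Real.cosh s - Real.tanh (β / 2 * c) ^ 2 * Real.sinh s
  refine ⟨s, hs, θ, hθ, Real.exp (s * θ) * r, hρ, fun n a ε ha has ↦ ?_⟩
  have hr : 0 ≤ r := (pos_of_mul_pos_right hρ.1 (Real.exp_pos _).le).le
  set Z₀ := partitionFn (β / 2) 0 ε
  set K := activeEdges ε
  have hanti : restrictedPartitionFn (β / 2) s ε (antiAligned c) ≤ (n + 1) ^ 2 * (Z₀ * r ^ K) :=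
    restrictedPartitionFn_antiAligned_le hγ hm hfix hc hs hr ε
  rw [dilMagDist_real, div_le_iff₀ (partitionFn_pos _ _ _)]
  calc restrictedPartitionFn (β / 2) a ε (antiAligned c)
      ≤ Real.exp (-(θ * a * K)) * (Z₀ + Real.exp (s * θ) ^ K * ((n + 1) ^ 2 * (Z₀ * r ^ K))) := by
        grw [restrictedPartitionFn_le_of_le ha has _ θ, hanti]
    _ = Real.exp (-(θ * a * K)) * (1 + (n + 1) ^ 2 * (Real.exp (s * θ) * r) ^ K) * Z₀ := by
        rw [mul_pow]
        ring
    _ ≤ _ := by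
        have hρ₀ := hρ.1
        gcongr
        exact partitionFn_zero_le _ a ε

end MagDist

/-! ### Limits for a fixed sequence of dilutions -/

section QuenchedLimit

variable {β m : ℝ}

/-- The limit law of the magnetization vector when the blocks are locked to the same sign. -/
def twoPointLaw (m : ℝ) : Measure (ℝ × ℝ) :=
  (2 : ENNReal)⁻¹ • (Measure.dirac (m, m) + Measure.dirac (-m, -m))

/-- The limit law of the magnetization vector when the signs of the blocks decouple. -/
def fourPointLaw (m : ℝ) : Measure (ℝ × ℝ) :=
  (4 : ENNReal)⁻¹ • (Measure.dirac (m, m) + Measure.dirac (m, -m) + Measure.dirac (-m, m) +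
    Measure.dirac (-m, -m))

lemma tendsto_sq_mul_exp_neg {κ : ℝ} (hκ : 0 < κ) :
    Tendsto (fun n : ℕ ↦ ((n : ℝ) + 1) ^ 2 * Real.exp (-κ * n)) atTop (𝓝 0) := by
  have hpow := ((tendsto_pow_const_mul_const_pow_of_abs_lt_one 2
    (r := Real.exp (-κ)) (by simpa using hκ)).comp (tendsto_add_atTop_nat 1)).mul_const (Real.exp κ)
  rw [zero_mul] at hpow
  refine hpow.congr fun n ↦ ?_
  rw [Function.comp_apply, ← Real.exp_nat_mul, mul_assoc, ← Real.exp_add]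
  push_cast
  ring_nf

lemma tendsto_dilMagDist_offPeak (hβ : 0 < β) (hm : 0 < m) (hfix : m = Real.tanh (β / 2 * m))
    {U : Set (ℝ × ℝ)} (hU : U ∈ 𝓝 (m, m)) {a : ℕ → ℝ} (ha : Tendsto a atTop (𝓝 0))
    (ε : (n : ℕ) → Fin n → Bool) :
    Tendsto (fun n ↦ (dilMagDist n (a n) β (ε n)).real {z | (|z.1|, |z.2|) ∉ U}) atTop (𝓝 0) := by
  obtain ⟨κ, hκ, hbound⟩ := exists_dilMagDist_offPeak_le hβ hm hfix hU
  refine squeeze_zero' (.of_forall fun _ ↦ measureReal_nonneg) ?_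
    (tendsto_sq_mul_exp_neg (half_pos hκ))
  have habs : Tendsto (fun n ↦ |a n|) atTop (𝓝 0) := by simpa using ha.abs
  filter_upwards [habs.eventually_lt_const (half_pos hκ)] with n hn
  refine (hbound n (a n) (ε n)).trans ?_
  gcongr
  linarith

lemma sign_smul_notMem_subset {U : Set (ℝ × ℝ)} {c : ℝ} :
    {z : ℝ × ℝ | ∀ u : ℤˣ, u • z ∉ U} ⊆
      {z | (|z.1|, |z.2|) ∉ U ∩ Set.Ici c ×ˢ Set.Ici c} ∪ antiAligned c := by
  intro z hz
  by_contra hcon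
  rw [Set.mem_union, not_or] at hcon
  obtain ⟨hzU, hz₁, hz₂⟩ := not_not.1 hcon.1
  have hnonneg : 0 ≤ z.1 * z.2 := not_lt.1 fun hneg ↦ hcon.2 ⟨hz₁, hz₂, hneg⟩
  rcases mul_nonneg_iff.1 hnonneg with ⟨h₁, h₂⟩ | ⟨h₁, h₂⟩
  · rw [abs_of_nonneg h₁, abs_of_nonneg h₂] at hzU
    exact hz 1 (by rwa [one_smul])
  · rw [abs_of_nonpos h₁, abs_of_nonpos h₂] at hzU
    exact hz (-1) (by rwa [Units.neg_smul, one_smul])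

lemma prod_sign_smul_notMem_subset {U : Set (ℝ × ℝ)} :
    {z : ℝ × ℝ | ∀ g : ℤˣ × ℤˣ, g • z ∉ U} ⊆ {z | (|z.1|, |z.2|) ∉ U} := by
  have habs : ∀ x : ℝ, ∃ u : ℤˣ, u • x = |x| := fun x ↦ by
    rcases abs_choice x with h | h
    · exact ⟨1, by simp [h]⟩
    · exact ⟨-1, by simp [h, Units.smul_def]⟩
  intro z hz hzU
  obtain ⟨u, hu⟩ := habs z.1
  obtain ⟨v, hv⟩ := habs z.2
  exact hz (u, v) (by rwa [prod_sign_smul_def, hu, hv])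

theorem exists_tendsto_integral_dilMagDist_two_point (hβ : 0 < β) (hm : 0 < m)
    (hfix : m = Real.tanh (β / 2 * m)) :
    ∃ ρ ∈ Set.Ioo (0 : ℝ) 1, ∀ (a : ℕ → ℝ) (ε : (n : ℕ) → Fin n → Bool),
      Tendsto a atTop (𝓝 0) → Tendsto (fun n ↦ a n * activeEdges (ε n)) atTop atTop →
      Tendsto (fun n : ℕ ↦ ((n : ℝ) + 1) ^ 2 * ρ ^ activeEdges (ε n)) atTop (𝓝 0) →
      ∀ f : ℝ × ℝ →ᵇ ℝ, Tendsto (fun n ↦ ∫ z, f z ∂dilMagDist n (a n) β (ε n)) atTop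
        (𝓝 (∫ z, f z ∂twoPointLaw m)) := by
  obtain ⟨s, hs, θ, hθ, ρ, hρ, hanti⟩ :=
    exists_dilMagDist_antiAligned_le hβ hm hfix (half_pos hm)
  refine ⟨ρ, hρ, fun a ε ha haK hρK f ↦ ?_⟩
  have hantiTendsto : Tendsto (fun n ↦ (dilMagDist n (a n) β (ε n)).real (antiAligned (m / 2)))
      atTop (𝓝 0) := by
    have hlim : Tendsto (fun n : ℕ ↦ Real.exp (-(θ * (a n * activeEdges (ε n)))) *
        (1 + ((n : ℝ) + 1) ^ 2 * ρ ^ activeEdges (ε n))) atTop (𝓝 0) := by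
      simpa using (Real.tendsto_exp_neg_atTop_nhds_zero.comp (haK.const_mul_atTop hθ)).mul
        (hρK.const_add 1)
    refine squeeze_zero' (.of_forall fun _ ↦ measureReal_nonneg) ?_ hlim
    filter_upwards [haK.eventually_gt_atTop 0, ha.eventually_le_const hs] with n hpos hle
    rw [← mul_assoc]
    exact hanti n (a n) (ε n) (pos_of_mul_pos_left hpos (Nat.cast_nonneg _)).le hle
  have hconc : ∀ U ∈ 𝓝 (m, m), Tendsto (fun n ↦ (dilMagDist n (a n) β (ε n)).real
      {z | ∀ u : ℤˣ, u • z ∉ U}) atTop (𝓝 0) := by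
    intro U hU
    have hU' : U ∩ Set.Ici (m / 2) ×ˢ Set.Ici (m / 2) ∈ 𝓝 (m, m) :=
      inter_mem hU (prod_mem_nhds (Ici_mem_nhds (half_lt_self hm)) (Ici_mem_nhds (half_lt_self hm)))
    have hsum := (tendsto_dilMagDist_offPeak hβ hm hfix hU' ha ε).add hantiTendsto
    rw [add_zero] at hsum
    exact squeeze_zero (fun _ ↦ measureReal_nonneg) (fun n ↦
      (measureReal_mono sign_smul_notMem_subset).trans (measureReal_union_le _ _)) hsum
  convert tendsto_integral_of_concentration_on_orbit hconc f using 2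
  rw [twoPointLaw, integral_smul_measure, integral_add_measure (f.integrable _) (f.integrable _),
    integral_dirac, integral_dirac]
  simp [UnitsInt.univ, Units.smul_def]

theorem tendsto_integral_dilMagDist_four_point (hβ : 0 < β) (hm : 0 < m)
    (hfix : m = Real.tanh (β / 2 * m)) {a : ℕ → ℝ} {ε : (n : ℕ) → Fin n → Bool}
    (haK : Tendsto (fun n ↦ a n * activeEdges (ε n)) atTop (𝓝 0)) (f : ℝ × ℝ →ᵇ ℝ) :
    Tendsto (fun n ↦ ∫ z, f z ∂dilMagDist n (a n) β (ε n)) atTop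
      (𝓝 (∫ z, f z ∂fourPointLaw m)) := by
  have hconc : ∀ U ∈ 𝓝 (m, m), Tendsto (fun n ↦ (dilMagDist n 0 β (ε n)).real
      {z | ∀ g : ℤˣ × ℤˣ, g • z ∉ U}) atTop (𝓝 0) := fun U hU ↦
    squeeze_zero (fun _ ↦ measureReal_nonneg)
      (fun n ↦ measureReal_mono prod_sign_smul_notMem_subset)
      (tendsto_dilMagDist_offPeak hβ hm hfix hU tendsto_const_nhds ε)
  have hdiff : Tendsto (fun n ↦ ∫ z, f z ∂dilMagDist n (a n) β (ε n) -
      ∫ z, f z ∂dilMagDist n 0 β (ε n)) atTop (𝓝 0) := by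
    have hlim : Tendsto (fun n ↦ 2 * ‖f‖ * (Real.exp |a n * activeEdges (ε n)| - 1))
        atTop (𝓝 0) := by
      simpa using ((Real.continuous_exp.tendsto 0).comp (by simpa using haK.abs)).sub_const 1
        |>.const_mul (2 * ‖f‖)
    refine squeeze_zero_norm (fun n ↦ ?_) hlim
    simpa [abs_mul] using abs_integral_dilMagDist_sub_le (a n) β (ε n) f
  have hzero := tendsto_integral_of_concentration_on_orbit hconc f
  convert hdiff.add hzero using 2
  · ring
  · have hint : ∀ μ : Measure (ℝ × ℝ), [IsFiniteMeasure μ] → Integrable f μ :=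
      fun μ _ ↦ f.integrable μ
    rw [fourPointLaw, integral_smul_measure, integral_add_measure (hint _) (hint _),
      integral_add_measure (hint _) (hint _), integral_add_measure (hint _) (hint _)]
    simp [UnitsInt.univ, Units.smul_def, prod_sign_smul_def, Fintype.sum_prod_type]
    ring

end QuenchedLimit

/-! ### The number of active edges -/

section ActiveEdges

variable {n : ℕ} {q : ℝ}

lemma bernWeight_nonneg (hq : q ∈ Set.Icc (0 : ℝ) 1) (ε : Fin n → Bool) :
    0 ≤ ∏ i, if ε i then q else 1 - q :=
  Finset.prod_nonneg fun i _ ↦ by split_ifs <;> linarith [hq.1, hq.2]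

instance isFiniteMeasure_bernMeasure : IsFiniteMeasure (bernMeasure n q) := by
  refine ⟨?_⟩
  simp [bernMeasure, ENNReal.sum_lt_top]

lemma integral_bernMeasure (hq : q ∈ Set.Icc (0 : ℝ) 1) (f : (Fin n → Bool) → ℝ) :
    ∫ ε, f ε ∂bernMeasure n q = ∑ ε, (∏ i, if ε i then q else 1 - q) * f ε := by
  rw [bernMeasure, integral_finsetSum_measure fun ε _ ↦
    (integrable_dirac (by simp)).smul_measure ENNReal.ofReal_ne_top]
  refine Finset.sum_congr rfl fun ε _ ↦ ?_
  rw [integral_smul_measure, integral_dirac, ENNReal.toReal_ofReal (bernWeight_nonneg hq ε),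
    smul_eq_mul]

lemma mgf_activeEdges (hq : q ∈ Set.Icc (0 : ℝ) 1) (t : ℝ) :
    ProbabilityTheory.mgf (fun ε ↦ (activeEdges ε : ℝ)) (bernMeasure n q) t =
      (1 - q + q * Real.exp t) ^ n := by
  have hprod : ∀ ε : Fin n → Bool, (∏ i, if ε i then q else 1 - q) *
      Real.exp (t * activeEdges ε) = ∏ i, if ε i then q * Real.exp t else 1 - q := by
    intro ε
    rw [mul_comm t, Real.exp_nat_mul, activeEdges, ← Finset.prod_const, Finset.prod_filter,
      ← Finset.prod_mul_distrib]
    refine Finset.prod_congr rfl fun i _ ↦ ?_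
    split_ifs <;> simp
  have hsum := Finset.prod_univ_sum (fun _ : Fin n ↦ (Finset.univ : Finset Bool))
    fun _ b ↦ if b then q * Real.exp t else 1 - q
  rw [Fintype.piFinset_univ] at hsum
  rw [ProbabilityTheory.mgf, integral_bernMeasure hq]
  simp only [hprod]
  rw [← hsum]
  simp [add_comm]

lemma isProbabilityMeasure_bernMeasure (hq : q ∈ Set.Icc (0 : ℝ) 1) :
    IsProbabilityMeasure (bernMeasure n q) := by
  have hmgf := mgf_activeEdges (n := n) hq 0
  rw [ProbabilityTheory.mgf_zero', Real.exp_zero, mul_one, sub_add_cancel, one_pow] at hmgf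
  exact isProbabilityMeasure_iff_real.2 hmgf

lemma mgf_activeEdges_le (hq : q ∈ Set.Icc (0 : ℝ) 1) (t : ℝ) :
    ProbabilityTheory.mgf (fun ε ↦ (activeEdges ε : ℝ)) (bernMeasure n q) t ≤
      Real.exp (n * (q * (Real.exp t - 1))) := by
  rw [mgf_activeEdges hq, Real.exp_nat_mul]
  have hnonneg : 0 ≤ 1 - q + q * Real.exp t :=
    add_nonneg (sub_nonneg.2 hq.2) (mul_nonneg hq.1 (Real.exp_pos t).le)
  refine pow_le_pow_left₀ hnonneg ?_ n
  linarith [Real.add_one_le_exp (q * (Real.exp t - 1))]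

lemma bernMeasure_real_activeEdges_le (hq : q ∈ Set.Icc (0 : ℝ) 1) :
    (bernMeasure n q).real {ε | (activeEdges ε : ℝ) ≤ n * q / 2} ≤
      Real.exp (-(n * q / 10)) := by
  refine (ProbabilityTheory.measure_le_le_exp_mul_mgf (t := -1) (n * q / 2) (by norm_num)
    (Integrable.of_finite)).trans ?_
  grw [mgf_activeEdges_le hq]
  rw [← Real.exp_add]
  have hexp := Real.exp_neg_one_lt_d9
  have hnq : 0 ≤ n * q := mul_nonneg n.cast_nonneg hq.1
  exact Real.exp_le_exp.2 (by nlinarith)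

lemma bernMeasure_real_le_activeEdges (hq : q ∈ Set.Icc (0 : ℝ) 1) :
    (bernMeasure n q).real {ε | 3 * (n * q) ≤ (activeEdges ε : ℝ)} ≤
      Real.exp (-(n * q / 10)) := by
  refine (ProbabilityTheory.measure_ge_le_exp_mul_mgf (t := 1) (3 * (n * q)) zero_le_one
    (Integrable.of_finite)).trans ?_
  grw [mgf_activeEdges_le hq]
  rw [← Real.exp_add]
  have hexp := Real.exp_one_lt_d9
  have hnq : 0 ≤ n * q := mul_nonneg n.cast_nonneg hq.1
  exact Real.exp_le_exp.2 (by nlinarith)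

lemma bernMeasure_real_activeEdges_notMem_le (hq : q ∈ Set.Icc (0 : ℝ) 1) :
    (bernMeasure n q).real {ε | (activeEdges ε : ℝ) ∉ Set.Icc (n * q / 2) (3 * (n * q))} ≤
      2 * Real.exp (-(n * q / 10)) := by
  have hsub : {ε : Fin n → Bool | (activeEdges ε : ℝ) ∉ Set.Icc (n * q / 2) (3 * (n * q))} ⊆
      {ε | (activeEdges ε : ℝ) ≤ n * q / 2} ∪ {ε | 3 * (n * q) ≤ (activeEdges ε : ℝ)} := by
    intro ε hε
    rw [Set.mem_ofPred_eq, Set.mem_Icc, not_and_or, not_le, not_le] at hε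
    exact hε.imp le_of_lt le_of_lt
  calc _ ≤ _ := (measureReal_mono hsub).trans (measureReal_union_le _ _)
    _ ≤ _ := add_le_add (bernMeasure_real_activeEdges_le hq) (bernMeasure_real_le_activeEdges hq)
    _ = _ := (two_mul _).symm

lemma exp_neg_natCast_mul_log (k : ℕ) {x : ℝ} (hx : 0 < x) :
    Real.exp (-(k * Real.log x)) = 1 / x ^ k := by
  rw [Real.exp_neg, Real.exp_nat_mul, Real.exp_log hx, one_div]

lemma ae_eventually_activeEdges_mem {q : ℕ → ℝ} (hq : ∀ n, q n ∈ Set.Icc (0 : ℝ) 1)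
    (hlog : ∀ᶠ n : ℕ in atTop, 20 * Real.log n ≤ n * q n) {Ω : Type*} [MeasurableSpace Ω]
    {P : Measure Ω} {E : Ω → (n : ℕ) → Fin n → Bool}
    (hE : ∀ n, P.map (fun ω ↦ E ω n) = bernMeasure n (q n)) :
    ∀ᵐ ω ∂P, ∀ᶠ n : ℕ in atTop,
      (activeEdges (E ω n) : ℝ) ∈ Set.Icc (n * q n / 2) (3 * (n * q n)) := by
  set bad : (n : ℕ) → Set (Fin n → Bool) := fun n ↦
    {ε | (activeEdges ε : ℝ) ∉ Set.Icc (n * q n / 2) (3 * (n * q n))}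
  have hsummable : Summable fun n ↦ (bernMeasure n (q n)).real (bad n) := by
    refine Summable.of_norm_bounded_eventually_nat
      ((Real.summable_one_div_nat_pow.2 one_lt_two).mul_left 2) ?_
    filter_upwards [hlog, eventually_gt_atTop 0] with n hn hn₀
    rw [Real.norm_of_nonneg measureReal_nonneg, ← exp_neg_natCast_mul_log 2 (Nat.cast_pos.2 hn₀)]
    refine (bernMeasure_real_activeEdges_notMem_le (hq n)).trans ?_
    gcongr
    push_cast
    linarith
  have hprob : ∀ n, P ((fun ω ↦ E ω n) ⁻¹' bad n) =
      ENNReal.ofReal ((bernMeasure n (q n)).real (bad n)) := by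
    intro n
    have hprobMeasure := isProbabilityMeasure_bernMeasure (n := n) (hq n)
    have hmeas : AEMeasurable (fun ω ↦ E ω n) P :=
      AEMeasurable.of_map_ne_zero (hE n ▸ IsProbabilityMeasure.ne_zero _)
    rw [ofReal_measureReal, ← hE n, Measure.map_apply_of_aemeasurable hmeas .of_discrete]
  have hsum : ∑' n, P ((fun ω ↦ E ω n) ⁻¹' bad n) ≠ ⊤ := by
    simp only [hprob]
    exact hsummable.tsum_ofReal_ne_top
  filter_upwards [ae_eventually_notMem hsum] with ω hω
  exact hω.mono fun n hn ↦ not_not.1 hn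

end ActiveEdges

/-! ### Almost sure limits -/

lemma tendsto_sq_mul_pow {ρ : ℝ} (hρ : ρ ∈ Set.Ioo (0 : ℝ) 1) {K : ℕ → ℕ}
    (hK : ∀ᶠ n : ℕ in atTop, 3 * Real.log n ≤ K n * -Real.log ρ) :
    Tendsto (fun n : ℕ ↦ ((n : ℝ) + 1) ^ 2 * ρ ^ K n) atTop (𝓝 0) := by
  have hlim : Tendsto (fun n : ℕ ↦ 4 * (1 / (n : ℝ))) atTop (𝓝 0) := by
    simpa using tendsto_one_div_atTop_nhds_zero_nat.const_mul (4 : ℝ)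
  refine squeeze_zero' (.of_forall fun n ↦ mul_nonneg (sq_nonneg _) (pow_nonneg hρ.1.le _)) ?_ hlim
  filter_upwards [hK, eventually_ge_atTop 1] with n hn hn₁
  have hn₁' : (1 : ℝ) ≤ n := Nat.one_le_cast.2 hn₁
  have hn₀ : (0 : ℝ) < n := one_pos.trans_le hn₁'
  have hpow : ρ ^ K n ≤ 1 / (n : ℝ) ^ 3 := by
    calc ρ ^ K n = Real.exp (K n * Real.log ρ) := by rw [Real.exp_nat_mul, Real.exp_log hρ.1]
      _ ≤ Real.exp (-((3 : ℕ) * Real.log n)) := Real.exp_le_exp.2 (by push_cast; linarith)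
      _ = 1 / (n : ℝ) ^ 3 := exp_neg_natCast_mul_log 3 hn₀
  calc ((n : ℝ) + 1) ^ 2 * ρ ^ K n ≤ (2 * n) ^ 2 * (1 / (n : ℝ) ^ 3) := by
        have hρ₀ := hρ.1
        gcongr
        linarith
    _ = 4 * (1 / (n : ℝ)) := by
        field_simp
        norm_num

lemma tendsto_mul_atTop_of_eventually_mem_Icc {a x K : ℕ → ℝ}
    (hK : ∀ᶠ n in atTop, K n ∈ Set.Icc (x n / 2) (3 * x n))
    (h : Tendsto (fun n ↦ x n * a n) atTop atTop) :
    Tendsto (fun n ↦ a n * K n) atTop atTop := by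
  refine tendsto_atTop_mono' _ ?_ (h.const_mul_atTop (half_pos one_pos))
  filter_upwards [hK, h.eventually_gt_atTop 0] with n hn hpos
  have ha : 0 < a n := pos_of_mul_pos_right hpos (by linarith [hn.1, hn.2])
  nlinarith [hn.1]

lemma tendsto_mul_zero_of_eventually_mem_Icc {a x K : ℕ → ℝ}
    (hK : ∀ᶠ n in atTop, K n ∈ Set.Icc (x n / 2) (3 * x n))
    (h : Tendsto (fun n ↦ x n * a n) atTop (𝓝 0)) :
    Tendsto (fun n ↦ a n * K n) atTop (𝓝 0) := by
  have hlim : Tendsto (fun n ↦ 3 * |x n * a n|) atTop (𝓝 0) := by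
    simpa using h.abs.const_mul 3
  refine squeeze_zero_norm' ?_ hlim
  filter_upwards [hK] with n hn
  have hx : 0 ≤ x n := by linarith [hn.1, hn.2]
  have hK₀ : 0 ≤ K n := (by positivity : 0 ≤ x n / 2).trans hn.1
  rw [Real.norm_eq_abs, abs_mul, abs_mul, abs_of_nonneg hx, abs_of_nonneg hK₀]
  nlinarith [mul_le_mul_of_nonneg_left hn.2 (abs_nonneg (a n))]

lemma eventually_mul_log_le_of_two_mul {b C : ℝ} (hb : 0 ≤ b) (hbC : b ≤ C) {p : ℕ → ℝ}
    (hlog : ∀ᶠ N : ℕ in atTop, 2 * C * Real.log N ≤ N * p N) :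
    ∀ᶠ n : ℕ in atTop, b * Real.log n ≤ n * p (2 * n) := by
  filter_upwards [(tendsto_id.const_mul_atTop' two_pos).eventually hlog, eventually_gt_atTop 0]
    with n hn hn₀
  have hn₀' : (0 : ℝ) < n := Nat.cast_pos.2 hn₀
  simp only [id, Nat.cast_mul, Nat.cast_ofNat] at hn
  have hmono : b * Real.log n ≤ C * Real.log (2 * n) := by
    have := hb.trans hbC
    have := Real.log_natCast_nonneg n
    gcongr
    linarith
  linarith

lemma exists_tendsto_integral_dilMagDist_of_activeEdges_mem {β m : ℝ} (hβ : 0 < β) (hm : 0 < m)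
    (hfix : m = Real.tanh (β / 2 * m)) :
    ∃ c > 0, ∀ (x : ℕ → ℝ) (ε : (n : ℕ) → Fin n → Bool),
      (∀ᶠ n : ℕ in atTop, c * Real.log n ≤ x n) →
      (∀ᶠ n in atTop, (activeEdges (ε n) : ℝ) ∈ Set.Icc (x n / 2) (3 * x n)) → ∀ a : ℕ → ℝ,
        (Tendsto a atTop (𝓝 0) → Tendsto (fun n ↦ x n * a n) atTop atTop → ∀ f : ℝ × ℝ →ᵇ ℝ,
          Tendsto (fun n ↦ ∫ z, f z ∂dilMagDist n (a n) β (ε n)) atTop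
            (𝓝 (∫ z, f z ∂twoPointLaw m))) ∧
        (Tendsto (fun n ↦ x n * a n) atTop (𝓝 0) → ∀ f : ℝ × ℝ →ᵇ ℝ,
          Tendsto (fun n ↦ ∫ z, f z ∂dilMagDist n (a n) β (ε n)) atTop
            (𝓝 (∫ z, f z ∂fourPointLaw m))) := by
  obtain ⟨ρ, hρ, htwo⟩ := exists_tendsto_integral_dilMagDist_two_point hβ hm hfix
  have hlogρ : 0 < -Real.log ρ := neg_pos.2 (Real.log_neg hρ.1 hρ.2)
  refine ⟨6 / -Real.log ρ, by positivity, fun x ε hx hK a ↦ ⟨fun ha hlim ↦ ?_, fun hlim ↦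
    tendsto_integral_dilMagDist_four_point hβ hm hfix
      (tendsto_mul_zero_of_eventually_mem_Icc hK hlim)⟩⟩
  refine htwo a ε ha (tendsto_mul_atTop_of_eventually_mem_Icc hK hlim) (tendsto_sq_mul_pow hρ ?_)
  filter_upwards [hx, hK] with n hxn hKn
  rw [div_mul_eq_mul_div, div_le_iff₀ hlogρ] at hxn
  linarith [mul_le_mul_of_nonneg_right hKn.1 hlogρ.le]

theorem diluted_limit_almost_surely_general {β m : ℝ} (hβ : 2 < β)
    (hm : IsGreatest {z | z = Real.tanh (β / 2 * z)} m) :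
    ∃ C > 0, ∀ p : ℕ → ℝ, (∀ N, p N ∈ Set.Icc (0 : ℝ) 1) →
      (∀ᶠ N : ℕ in atTop, C * Real.log N ≤ N * p N) →
      ∀ {Ω : Type*} [MeasurableSpace Ω] (P : Measure Ω) (E : Ω → (n : ℕ) → Fin n → Bool),
        (∀ n, P.map (fun ω ↦ E ω n) = bernMeasure n (p (2 * n))) →
        ∀ᵐ ω ∂P, ∀ α : ℕ → ℝ,
          (Tendsto α atTop (𝓝 0) → Tendsto (fun N : ℕ ↦ p N * N * α N) atTop atTop →
            ∀ f : ℝ × ℝ →ᵇ ℝ,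
              Tendsto (fun n ↦ ∫ z, f z ∂dilMagDist n (α (2 * n)) β (E ω n)) atTop
                (𝓝 (∫ z, f z ∂twoPointLaw m))) ∧
          (Tendsto (fun N : ℕ ↦ p N * N * α N) atTop (𝓝 0) → ∀ f : ℝ × ℝ →ᵇ ℝ,
            Tendsto (fun n ↦ ∫ z, f z ∂dilMagDist n (α (2 * n)) β (E ω n)) atTop
              (𝓝 (∫ z, f z ∂fourPointLaw m))) := by
  obtain ⟨c, hc, hlimits⟩ := exists_tendsto_integral_dilMagDist_of_activeEdges_mem
    (two_pos.trans hβ) (fixedPoint_pos (by linarith) hm) hm.1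
  refine ⟨2 * max 20 c, by positivity, fun p hp hlog Ω _ P E hE ↦ ?_⟩
  have hlog₂₀ := eventually_mul_log_le_of_two_mul (by norm_num) (le_max_left 20 c) hlog
  have hlog_c := eventually_mul_log_le_of_two_mul hc.le (le_max_right 20 c) hlog
  filter_upwards [ae_eventually_activeEdges_mem (fun n ↦ hp (2 * n)) hlog₂₀ hE] with ω hω α
  have heven : Tendsto (fun n ↦ 2 * n) atTop atTop := tendsto_id.const_mul_atTop' two_pos
  have hscale : (fun n : ℕ ↦ n * p (2 * n) * α (2 * n)) =
      fun n : ℕ ↦ 2⁻¹ * (p (2 * n) * (2 * n : ℕ) * α (2 * n)) := by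
    funext n
    push_cast
    ring
  obtain ⟨htwo, hfour⟩ := hlimits _ (E ω) hlog_c hω fun n ↦ α (2 * n)
  rw [hscale] at htwo hfour
  refine ⟨fun hα hlim ↦ htwo (hα.comp heven) ?_, fun hlim ↦ hfour ?_⟩
  · exact (hlim.comp heven).const_mul_atTop (by norm_num)
  · simpa using (hlim.comp heven).const_mul 2⁻¹

/-- Theorem 2, almost-sure version: if `β > 2` and `α_N ↓ 0`, there is a constant `C > 0`
such that whenever `N p(N) ≥ C log N` for all sufficiently large `N`, then `P`-almost
surely: if `p(N) N α_N → ∞` the distribution of `m^N` under `μ^ε_{N,α_N,β}` converges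
weakly to `(1/2)(δ_{(m⁺,m⁺)} + δ_{(m⁻,m⁻)})`, and if `p(N) N α_N → 0` it converges
weakly to `(1/4)(δ_{(m⁺,m⁺)} + δ_{(m⁺,m⁻)} + δ_{(m⁻,m⁺)} + δ_{(m⁻,m⁻)})`. -/
theorem diluted_limit_almost_surely (β : ℝ) (hβ : 2 < β) (mp : ℝ)
    (hfix : mp = Real.tanh (β / 2 * mp))
    (hmax : ∀ z : ℝ, z = Real.tanh (β / 2 * z) → z ≤ mp)
    (α : ℕ → ℝ) (hαpos : ∀ N, 0 < α N)
    (hα0 : Tendsto α atTop (nhds 0)) :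
    ∃ C : ℝ, 0 < C ∧
      ∀ (p : ℕ → ℝ), (∀ N, p N ∈ Set.Ioc (0 : ℝ) 1) →
        (∀ᶠ N : ℕ in atTop, C * Real.log N ≤ (N : ℝ) * p N) →
        ∀ (Ω : Type) [MeasurableSpace Ω] (P : Measure Ω), IsProbabilityMeasure P →
          ∀ (E : Ω → (n : ℕ) → Fin n → Bool),
            (∀ n : ℕ, Measure.map (fun ω => E ω n) P = bernMeasure n (p (2 * n))) →
            (Tendsto (fun N : ℕ => p N * N * α N) atTop atTop →
              ∀ᵐ ω ∂P, ∀ f : BoundedContinuousFunction (ℝ × ℝ) ℝ,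
                Tendsto (fun n : ℕ => ∫ x, f x ∂(dilMagDist n (α (2 * n)) β (E ω n)))
                  atTop
                  (nhds (∫ x, f x ∂((2 : ENNReal)⁻¹ •
                    (Measure.dirac ((mp, mp) : ℝ × ℝ) +
                      Measure.dirac ((-mp, -mp) : ℝ × ℝ)))))) ∧
            (Tendsto (fun N : ℕ => p N * N * α N) atTop (nhds 0) →
              ∀ᵐ ω ∂P, ∀ f : BoundedContinuousFunction (ℝ × ℝ) ℝ,
                Tendsto (fun n : ℕ => ∫ x, f x ∂(dilMagDist n (α (2 * n)) β (E ω n)))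
                  atTop
                  (nhds (∫ x, f x ∂((4 : ENNReal)⁻¹ •
                    (Measure.dirac ((mp, mp) : ℝ × ℝ) + Measure.dirac ((mp, -mp) : ℝ × ℝ) +
                      Measure.dirac ((-mp, mp) : ℝ × ℝ) +
                      Measure.dirac ((-mp, -mp) : ℝ × ℝ)))))) := by
  obtain ⟨C, hC, hlimits⟩ := diluted_limit_almost_surely_general hβ ⟨hfix, fun z hz ↦ hmax z hz⟩
  refine ⟨C, hC, fun p hp hlog Ω _ P _ E hE ↦ ?_⟩
  have hae := hlimits p (fun N ↦ Set.Ioc_subset_Icc_self (hp N)) hlog P E hE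
  exact ⟨fun hlim ↦ hae.mono fun ω hω ↦ (hω α).1 hα0 hlim,
    fun hlim ↦ hae.mono fun ω hω ↦ (hω α).2 hlim⟩

end
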